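/- Let (Ω,𝔽,P) be a probability space with a filtration (ℱ_t)_{t=0,…,T}, let (L_t)_{t=1,…,T} be an adapted process taking values in 𝒦⊆ℝ, let (R_t) and (R*_t) be predictable ℝ^d-valued processes, and let (λ_t) be a nonnegative predictable process such that inf_{x∈𝒦}{ λ_t(S(x,R_t)−S(x,R*_t)) } ≥ −1 almost surely for all t, where S:ℝ^{d+1}→ℝ is a scoring function. Suppose that for every t, E[S(L_t,R_t)−S(L_t,R*_t) | ℱ_{t−1}] ≤ 0 almost surely (the null hypothesis H⁻(ψ) of conditional S-dominance of (R_t) over (R*_t)). Then the process M⁻_0 = 1 and M⁻_t = ∏_{s=1}^{t}(1+λ_s(S(L_s,R_s)−S(L_s,R*_s))) is a nonnegative supermartingale with respect to (ℱ_t), and hence an e-process: E[M⁻_τ] ≤ 1 for every stopping time τ ≤ T. -/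

import Mathlib

open MeasureTheory

/-! The increment of the wealth is `M_t - M_{t-1} = (M_{t-1} λ_t) D_t`, where `D_t` is the score
difference: a nonnegative `ℱ_{t-1}`-measurable stake times a variable of nonpositive conditional
mean. Pulling the stake out of the conditional expectation gives the supermartingale inequality,
and optional stopping gives the bound on `E[M_τ]`.

The pull-out requires `M_{t-1} λ_t D_t` to be integrable although the stake may be unbounded. This
holds because the product is bounded below by the integrable variable `-M_{t-1}`, while on the
events `{M_{t-1} λ_t ≤ n}` its integral is nonpositive. -/

section PullOut

variable {Ω : Type*} {m m0 : MeasurableSpace Ω} {μ : Measure Ω} {f g h : Ω → ℝ}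

lemma condExp_mul_nonpos (hf : StronglyMeasurable[m] f) (hf0 : 0 ≤ᵐ[μ] f)
    (hfg : Integrable (f * g) μ) (hg : Integrable g μ) (hg0 : μ[g | m] ≤ᵐ[μ] 0) :
    μ[f * g | m] ≤ᵐ[μ] 0 := by
  filter_upwards [condExp_mul_of_stronglyMeasurable_left hf hfg hg, hf0, hg0] with ω hpull hfω hgω
  rw [hpull]
  exact mul_nonpos_of_nonneg_of_nonpos hfω hgω

lemma condExp_add_mul_le (hm : m ≤ m0) [SigmaFinite (μ.trim hm)] (hf : StronglyMeasurable[m] f)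
    (hf0 : 0 ≤ᵐ[μ] f) (hfg : Integrable (f * g) μ) (hg : Integrable g μ) (hg0 : μ[g | m] ≤ᵐ[μ] 0)
    (hh : StronglyMeasurable[m] h) (hh_int : Integrable h μ) :
    μ[h + f * g | m] ≤ᵐ[μ] h := by
  filter_upwards [condExp_add hh_int hfg m, condExp_mul_nonpos hf hf0 hfg hg hg0] with ω hadd hprod
  rw [hadd, Pi.add_apply, condExp_of_stronglyMeasurable hm hh hh_int]
  exact add_le_of_nonpos_right hprod

lemma setIntegral_mul_nonpos_of_condExp_nonpos (hm : m ≤ m0) [SigmaFinite (μ.trim hm)]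
    {s : Set Ω} (hs : MeasurableSet[m] s) (hf : StronglyMeasurable[m] f) (hf0 : 0 ≤ᵐ[μ] f)
    (hfg : IntegrableOn (f * g) s μ) (hg : Integrable g μ) (hg0 : μ[g | m] ≤ᵐ[μ] 0) :
    ∫ ω in s, (f * g) ω ∂μ ≤ 0 := by
  have hind : s.indicator (f * g) = s.indicator f * g :=
    funext fun _ => Set.indicator_mul_left s f g
  have hind_int : Integrable (s.indicator f * g) μ := hind ▸ hfg.integrable_indicator (hm s hs)
  have hind0 : 0 ≤ᵐ[μ] s.indicator f := hf0.mono fun ω hω => Set.indicator_apply_nonneg fun _ => hω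
  rw [← integral_indicator (hm s hs), hind, ← integral_condExp hm]
  exact integral_nonpos_of_ae (condExp_mul_nonpos (hf.indicator hs) hind0 hind_int hg hg0)

lemma integrable_mul_of_condExp_nonpos (hm : m ≤ m0) [SigmaFinite (μ.trim hm)]
    (hf : StronglyMeasurable[m] f) (hf0 : 0 ≤ᵐ[μ] f) (hg : Integrable g μ)
    (hg0 : μ[g | m] ≤ᵐ[μ] 0) (hh : Integrable h μ) (hhfg : h ≤ᵐ[μ] f * g) :
    Integrable (f * g) μ := by
  have hs (n : ℕ) : MeasurableSet[m] {ω | f ω ≤ n} :=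
    measurableSet_le hf.measurable measurable_const
  have hfg_int (n : ℕ) : IntegrableOn (f * g) {ω | f ω ≤ n} μ := by
    refine hg.integrableOn.bdd_mul (c := n) (hf.mono hm).aestronglyMeasurable ?_
    filter_upwards [ae_restrict_mem (hm _ (hs n)), ae_restrict_of_ae hf0] with ω hle h0
    rwa [Real.norm_of_nonneg h0]
  have hbound (n : ℕ) : ∫ ω in {ω | f ω ≤ n}, (f * g - h) ω ∂μ ≤ ∫ ω, |h ω| ∂μ := calc
    _ = ∫ ω in {ω | f ω ≤ n}, (f * g) ω ∂μ - ∫ ω in {ω | f ω ≤ n}, h ω ∂μ :=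
      integral_sub' (hfg_int n) hh.integrableOn
    _ ≤ -∫ ω in {ω | f ω ≤ n}, h ω ∂μ := by
      linarith [setIntegral_mul_nonpos_of_condExp_nonpos hm (hs n) hf hf0 (hfg_int n) hg hg0]
    _ ≤ ∫ ω in {ω | f ω ≤ n}, |h ω| ∂μ := (neg_le_abs _).trans abs_integral_le_integral_abs
    _ ≤ ∫ ω, |h ω| ∂μ := setIntegral_le_integral hh.abs (.of_forall fun ω => abs_nonneg (h ω))
  have hcover : AECover μ Filter.atTop fun n : ℕ => {ω | f ω ≤ n} :=
    { ae_eventually_mem := .of_forall fun ω =>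
        (tendsto_natCast_atTop_atTop (R := ℝ)).eventually_ge_atTop (f ω)
      measurableSet := fun n => hm _ (hs n) }
  have hsub : Integrable (f * g - h) μ :=
    hcover.integrable_of_integral_bounded_of_nonneg_ae _
      (fun n => (hfg_int n).sub hh.integrableOn) (hhfg.mono fun ω hω => sub_nonneg.2 hω)
      (.of_forall hbound)
  simpa using hsub.add hh

end PullOut

section OptionalStopping

variable {Ω E : Type*} {m0 : MeasurableSpace Ω} {μ : Measure Ω} {ℱ : Filtration ℕ m0}
  [NormedAddCommGroup E] [NormedSpace ℝ E] [CompleteSpace E] [PartialOrder E]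
  [IsOrderedAddMonoid E] [IsOrderedModule ℝ E] [ClosedIciTopology E] {M : ℕ → Ω → E}

lemma expected_stoppedValue_anti_of_supermartingale [SigmaFiniteFiltration μ ℱ] {σ τ : Ω → ℕ∞}
    (hM : Supermartingale M ℱ μ) (hσ : IsStoppingTime ℱ σ) (hτ : IsStoppingTime ℱ τ) (hle : σ ≤ τ)
    {N : ℕ} (hbdd : ∀ ω, τ ω ≤ N) :
    ∫ ω, stoppedValue M τ ω ∂μ ≤ ∫ ω, stoppedValue M σ ω ∂μ := by
  have key : ∫ ω, -stoppedValue M σ ω ∂μ ≤ ∫ ω, -stoppedValue M τ ω ∂μ :=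
    hM.neg.expected_stoppedValue_mono hσ hτ hle hbdd
  rwa [integral_neg, integral_neg, neg_le_neg_iff] at key

lemma supermartingale_min_of_condExp_succ_le [IsFiniteMeasure μ] {T : ℕ}
    (hadp : ∀ t, t ≤ T → StronglyMeasurable[ℱ t] (M t)) (hint : ∀ t, t ≤ T → Integrable (M t) μ)
    (hsucc : ∀ t, t < T → μ[M (t + 1) | ℱ t] ≤ᵐ[μ] M t) :
    Supermartingale (fun t => M (min t T)) ℱ μ := by
  have hmeas (t : ℕ) : StronglyMeasurable[ℱ t] (M (min t T)) :=
    (hadp _ (min_le_right t T)).mono (ℱ.mono (min_le_left t T))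
  refine supermartingale_nat hmeas (fun t => hint _ (min_le_right t T)) fun t => ?_
  rcases lt_or_ge t T with h | h
  · simpa only [min_eq_left h.le, min_eq_left (Nat.succ_le_of_lt h)] using hsucc t h
  · have hT : StronglyMeasurable[ℱ t] (M T) := (hadp T le_rfl).mono (ℱ.mono h)
    simp only [min_eq_right h, min_eq_right (h.trans t.le_succ)]
    rw [condExp_of_stronglyMeasurable (ℱ.le t) hT (hint T le_rfl)]

lemma integral_stoppedValue_le_integral_zero [IsFiniteMeasure μ] {T : ℕ}
    (hadp : ∀ t, t ≤ T → StronglyMeasurable[ℱ t] (M t)) (hint : ∀ t, t ≤ T → Integrable (M t) μ)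
    (hsucc : ∀ t, t < T → μ[M (t + 1) | ℱ t] ≤ᵐ[μ] M t) {τ : Ω → ℕ}
    (hτ : IsStoppingTime ℱ fun ω => (τ ω : WithTop ℕ)) (hτT : ∀ ω, τ ω ≤ T) :
    ∫ ω, stoppedValue M (fun ω => (τ ω : WithTop ℕ)) ω ∂μ ≤ ∫ ω, M 0 ω ∂μ := by
  have hstopped : stoppedValue (fun t => M (min t T)) (fun ω => (τ ω : WithTop ℕ)) =
      stoppedValue M fun ω => (τ ω : WithTop ℕ) :=
    funext fun ω => congrArg (M · ω) (min_eq_left (hτT ω))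
  have key := expected_stoppedValue_anti_of_supermartingale
    (supermartingale_min_of_condExp_succ_le hadp hint hsucc) (isStoppingTime_const ℱ 0) hτ
    (fun ω => WithTop.coe_le_coe.2 (τ ω).zero_le) (fun ω => WithTop.coe_le_coe.2 (hτT ω))
  rwa [hstopped] at key

end OptionalStopping

/-- The wealth at time `t` of a gambler who starts with `1` and, in round `s = 1, …, t`, stakes the
fraction `lam s` of the current wealth on a bet paying `D s` per unit. Rounds are numbered from `1`,
so `lam 0` and `D 0` do not enter. -/
def bettingWealth {Ω : Type*} (lam D : ℕ → Ω → ℝ) (t : ℕ) (ω : Ω) : ℝ :=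
  ∏ s ∈ Finset.range t, (1 + lam (s + 1) ω * D (s + 1) ω)

section BettingWealth

variable {Ω : Type*} {m0 : MeasurableSpace Ω} {μ : Measure Ω} {ℱ : Filtration ℕ m0} {T : ℕ}
  {lam D : ℕ → Ω → ℝ}

lemma bettingWealth_zero (lam D : ℕ → Ω → ℝ) : bettingWealth lam D 0 = 1 := rfl

lemma bettingWealth_succ (lam D : ℕ → Ω → ℝ) (t : ℕ) :
    bettingWealth lam D (t + 1) =
      bettingWealth lam D t + bettingWealth lam D t * lam (t + 1) * D (t + 1) := by
  ext ω
  simp only [bettingWealth, Finset.prod_range_succ, Pi.add_apply, Pi.mul_apply]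
  ring

lemma stronglyMeasurable_bettingWealth
    (hlam : ∀ t, t < T → StronglyMeasurable[ℱ t] (lam (t + 1)))
    (hD : ∀ t, t < T → StronglyMeasurable[ℱ (t + 1)] (D (t + 1))) {t : ℕ} (ht : t ≤ T) :
    StronglyMeasurable[ℱ t] (bettingWealth lam D t) := by
  refine Finset.stronglyMeasurable_fun_prod _ fun s hs => ?_
  have hst : s < t := Finset.mem_range.1 hs
  exact stronglyMeasurable_const.add (((hlam s (hst.trans_le ht)).mono (ℱ.mono hst.le)).mul
    ((hD s (hst.trans_le ht)).mono (ℱ.mono hst)))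

lemma bettingWealth_ae_nonneg
    (hbound : ∀ t, t < T → ∀ᵐ ω ∂μ, -1 ≤ lam (t + 1) ω * D (t + 1) ω) {t : ℕ} (ht : t ≤ T) :
    0 ≤ᵐ[μ] bettingWealth lam D t := by
  have hall : ∀ᵐ ω ∂μ, ∀ s, s < T → -1 ≤ lam (s + 1) ω * D (s + 1) ω :=
    ae_all_iff.2 fun s => Filter.eventually_imp_distrib_left.2 (hbound s)
  filter_upwards [hall] with ω hω
  exact Finset.prod_nonneg fun s hs =>
    neg_le_iff_add_nonneg'.1 (hω s ((Finset.mem_range.1 hs).trans_le ht))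

lemma bettingWealth_mul_ae_nonneg (hlam0 : ∀ t, t < T → 0 ≤ᵐ[μ] lam (t + 1))
    (hbound : ∀ t, t < T → ∀ᵐ ω ∂μ, -1 ≤ lam (t + 1) ω * D (t + 1) ω) {t : ℕ} (ht : t < T) :
    0 ≤ᵐ[μ] bettingWealth lam D t * lam (t + 1) := by
  filter_upwards [bettingWealth_ae_nonneg hbound ht.le, hlam0 t ht] with ω hM hlam
  exact mul_nonneg hM hlam

lemma integrable_bettingWealth [IsFiniteMeasure μ]
    (hlam : ∀ t, t < T → StronglyMeasurable[ℱ t] (lam (t + 1)))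
    (hlam0 : ∀ t, t < T → 0 ≤ᵐ[μ] lam (t + 1))
    (hD : ∀ t, t < T → StronglyMeasurable[ℱ (t + 1)] (D (t + 1)))
    (hbound : ∀ t, t < T → ∀ᵐ ω ∂μ, -1 ≤ lam (t + 1) ω * D (t + 1) ω)
    (hDint : ∀ t, t < T → Integrable (D (t + 1)) μ)
    (hcond : ∀ t, t < T → μ[D (t + 1) | ℱ t] ≤ᵐ[μ] 0) {t : ℕ} (ht : t ≤ T) :
    Integrable (bettingWealth lam D t) μ := by
  induction t with
  | zero => exact integrable_const 1
  | succ t ih =>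
    have hM : Integrable (bettingWealth lam D t) μ := ih (Nat.le_of_succ_le ht)
    have hstake := (stronglyMeasurable_bettingWealth hlam hD (Nat.le_of_succ_le ht)).mul (hlam t ht)
    have hlower : -bettingWealth lam D t ≤ᵐ[μ] bettingWealth lam D t * lam (t + 1) * D (t + 1) := by
      filter_upwards [bettingWealth_ae_nonneg hbound ht] with ω hω
      rw [bettingWealth_succ] at hω
      exact neg_le_iff_add_nonneg'.2 hω
    rw [bettingWealth_succ]
    exact hM.add (integrable_mul_of_condExp_nonpos (ℱ.le t) hstake
      (bettingWealth_mul_ae_nonneg hlam0 hbound ht) (hDint t ht) (hcond t ht) hM.neg hlower)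

lemma condExp_bettingWealth_succ_le [IsFiniteMeasure μ]
    (hlam : ∀ t, t < T → StronglyMeasurable[ℱ t] (lam (t + 1)))
    (hlam0 : ∀ t, t < T → 0 ≤ᵐ[μ] lam (t + 1))
    (hD : ∀ t, t < T → StronglyMeasurable[ℱ (t + 1)] (D (t + 1)))
    (hbound : ∀ t, t < T → ∀ᵐ ω ∂μ, -1 ≤ lam (t + 1) ω * D (t + 1) ω)
    (hDint : ∀ t, t < T → Integrable (D (t + 1)) μ)
    (hcond : ∀ t, t < T → μ[D (t + 1) | ℱ t] ≤ᵐ[μ] 0) {t : ℕ} (ht : t < T) :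
    μ[bettingWealth lam D (t + 1) | ℱ t] ≤ᵐ[μ] bettingWealth lam D t := by
  have hadp := stronglyMeasurable_bettingWealth hlam hD ht.le
  have hint {s : ℕ} (hs : s ≤ T) : Integrable (bettingWealth lam D s) μ :=
    integrable_bettingWealth hlam hlam0 hD hbound hDint hcond hs
  have hincr : Integrable (bettingWealth lam D t * lam (t + 1) * D (t + 1)) μ := by
    rw [← integrable_add_iff_integrable_right (hint ht.le), ← bettingWealth_succ]
    exact hint ht
  rw [bettingWealth_succ]
  exact condExp_add_mul_le (ℱ.le t) (hadp.mul (hlam t ht))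
    (bettingWealth_mul_ae_nonneg hlam0 hbound ht) hincr (hDint t ht) (hcond t ht) hadp (hint ht.le)

end BettingWealth

theorem stmt11_general {Ω : Type*} {m0 : MeasurableSpace Ω} {μ : Measure Ω} [IsProbabilityMeasure μ]
    {ℱ : Filtration ℕ m0} {T : ℕ} {lam D : ℕ → Ω → ℝ}
    (hlam : ∀ t, t < T → StronglyMeasurable[ℱ t] (lam (t + 1)))
    (hlam0 : ∀ t, t < T → 0 ≤ᵐ[μ] lam (t + 1))
    (hD : ∀ t, t < T → StronglyMeasurable[ℱ (t + 1)] (D (t + 1)))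
    (hbound : ∀ t, t < T → ∀ᵐ ω ∂μ, -1 ≤ lam (t + 1) ω * D (t + 1) ω)
    (hDint : ∀ t, t < T → Integrable (D (t + 1)) μ)
    (hcond : ∀ t, t < T → μ[D (t + 1) | ℱ t] ≤ᵐ[μ] 0) :
    (∀ t, t ≤ T → Integrable (bettingWealth lam D t) μ) ∧
    (∀ t, t ≤ T → StronglyMeasurable[ℱ t] (bettingWealth lam D t)) ∧
    (∀ t, t ≤ T → ∀ᵐ ω ∂μ, 0 ≤ bettingWealth lam D t ω) ∧
    (∀ t, t < T → μ[bettingWealth lam D (t + 1) | ℱ t] ≤ᵐ[μ] bettingWealth lam D t) ∧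
    (∀ τ : Ω → ℕ, IsStoppingTime ℱ (fun ω => (τ ω : WithTop ℕ)) → (∀ ω, τ ω ≤ T) →
      ∫ ω, stoppedValue (bettingWealth lam D) (fun ω => (τ ω : WithTop ℕ)) ω ∂μ ≤ 1) := by
  have hint (t : ℕ) (ht : t ≤ T) := integrable_bettingWealth hlam hlam0 hD hbound hDint hcond ht
  have hadp (t : ℕ) (ht : t ≤ T) := stronglyMeasurable_bettingWealth hlam hD ht
  have hsucc (t : ℕ) (ht : t < T) :=
    condExp_bettingWealth_succ_le hlam hlam0 hD hbound hDint hcond ht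
  refine ⟨hint, hadp, fun t ht => bettingWealth_ae_nonneg hbound ht, hsucc, fun τ hτ hτT => ?_⟩
  calc ∫ ω, stoppedValue (bettingWealth lam D) (fun ω => (τ ω : WithTop ℕ)) ω ∂μ
      ≤ ∫ ω, bettingWealth lam D 0 ω ∂μ :=
        integral_stoppedValue_le_integral_zero hadp hint hsucc hτ hτT
    _ = 1 := by simp [bettingWealth_zero]

/-- Theorem elic: with `(L_t)` taking values in `𝒦`, predictable
`ℝ^d`-valued forecasts `(R_t)`, `(R*_t)`, and a nonnegative predictable betting
process `(λ_t)` with `inf_{x∈𝒦} λ_t (S(x,R_t) − S(x,R*_t)) ≥ −1`, under the null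
`H⁻(ψ)` of conditional S-dominance the process
`M⁻_t = ∏_{s=1}^t (1 + λ_s (S(L_s,R_s) − S(L_s,R*_s)))` is a nonnegative
supermartingale, hence an e-process: `E[M⁻_τ] ≤ 1` for every stopping time
`τ ≤ T`. -/
theorem stmt11 {Ω : Type*} {m0 : MeasurableSpace Ω}
    (μ : Measure Ω) [IsProbabilityMeasure μ]
    (ℱ : Filtration ℕ m0) (T : ℕ) {d : ℕ}
    (𝒦 : Set ℝ)
    (L : ℕ → Ω → ℝ) (hL𝒦 : ∀ t ω, L t ω ∈ 𝒦)
    (hL : ∀ t, t ≤ T → StronglyMeasurable[ℱ t] (L t))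
    (R Rs : ℕ → Ω → (Fin d → ℝ)) (lam : ℕ → Ω → ℝ)
    (hR : ∀ t, t < T → StronglyMeasurable[ℱ t] (R (t + 1)))
    (hRs : ∀ t, t < T → StronglyMeasurable[ℱ t] (Rs (t + 1)))
    (hlam : ∀ t, t < T → StronglyMeasurable[ℱ t] (lam (t + 1)))
    (hlam0 : ∀ t ω, 0 ≤ lam t ω)
    (S : ℝ → (Fin d → ℝ) → ℝ)
    (hS : Measurable fun p : ℝ × (Fin d → ℝ) => S p.1 p.2)
    -- `inf_{x ∈ 𝒦} λ_t (S(x,R_t) − S(x,R*_t)) ≥ −1` almost surely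
    (hbound : ∀ t, 1 ≤ t → t ≤ T → ∀ᵐ ω ∂μ, ∀ x ∈ 𝒦,
      -1 ≤ lam t ω * (S x (R t ω) - S x (Rs t ω)))
    (hdiffint : ∀ t, t < T → Integrable
      (fun ω => S (L (t + 1) ω) (R (t + 1) ω) - S (L (t + 1) ω) (Rs (t + 1) ω)) μ)
    -- the null `H⁻(ψ)`: conditional S-dominance of `(R_t)` over `(R*_t)`
    (hcond : ∀ t, t < T →
      μ[fun ω => S (L (t + 1) ω) (R (t + 1) ω) - S (L (t + 1) ω) (Rs (t + 1) ω) | ℱ t]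
        ≤ᵐ[μ] 0)
    (Mm : ℕ → Ω → ℝ)
    (hMdef : ∀ t ω, Mm t ω = ∏ s ∈ Finset.range t,
      (1 + lam (s + 1) ω * (S (L (s + 1) ω) (R (s + 1) ω) - S (L (s + 1) ω) (Rs (s + 1) ω))))
    (hMint : ∀ t, t ≤ T → Integrable (Mm t) μ) :
    -- `(M⁻_t)` is a nonnegative supermartingale w.r.t. `(ℱ_t)`
    (∀ t, t ≤ T → StronglyMeasurable[ℱ t] (Mm t)) ∧
    (∀ t, t ≤ T → ∀ᵐ ω ∂μ, 0 ≤ Mm t ω) ∧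
    (∀ t, t < T → μ[Mm (t + 1) | ℱ t] ≤ᵐ[μ] Mm t) ∧
    -- hence an e-process: `E[M⁻_τ] ≤ 1` for every stopping time `τ ≤ T`
    (∀ τ : Ω → ℕ, IsStoppingTime ℱ (fun ω => (τ ω : WithTop ℕ)) → (∀ ω, τ ω ≤ T) →
      ∫ ω, stoppedValue Mm (fun ω => (τ ω : WithTop ℕ)) ω ∂μ ≤ 1) := by
  have hscore {t : ℕ} (ht : t < T) {Q : ℕ → Ω → Fin d → ℝ}
      (hQ : StronglyMeasurable[ℱ t] (Q (t + 1))) :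
      StronglyMeasurable[ℱ (t + 1)] fun ω => S (L (t + 1) ω) (Q (t + 1) ω) :=
    (hS.comp ((hL _ ht).measurable.prodMk
      (hQ.mono (ℱ.mono t.le_succ)).measurable)).stronglyMeasurable
  obtain rfl : Mm = bettingWealth lam fun t ω => S (L t ω) (R t ω) - S (L t ω) (Rs t ω) :=
    funext₂ hMdef
  exact (stmt11_general hlam (fun t _ => .of_forall (hlam0 (t + 1)))
    (fun t ht => (hscore ht (hR t ht)).sub (hscore ht (hRs t ht)))
    (fun t ht => (hbound (t + 1) t.succ_pos ht).mono fun ω hω => hω _ (hL𝒦 _ ω))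
    hdiffint hcond).2
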